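/- arXiv:2308.00185 — 2 statements merged into one kernel-verified Lean document; each statement's English description precedes it below -/
import Mathlib

section
/- Let J_T ⊆ [0,5] be nonempty, closed, satisfy J_T = S₋₁(J_T) ∪ S₊₁(J_T), and be contained in every nonempty closed subset of [0,5] satisfying this set equation. Then the Hausdorff dimension of J_T satisfies 0.55161856837246 ≤ dim_H(J_T) ≤ 0.55161856837247. -/
open Set MeasureTheory

/-- The two inverse branches of the decimation polynomial `R(x) = x(5-x)`
associated to the Sierpiński triangle. -/
noncomputable def S (ε : ℝ) (x : ℝ) : ℝ := (5 + ε * Real.sqrt (25 - 4 * x)) / 2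

/-! ### The inverse branches -/

/-- The sign `±1` selecting an inverse branch. -/
def branchSign (b : Bool) : ℝ := if b then 1 else -1

lemma abs_branchSign (b : Bool) : |branchSign b| = 1 := by
  cases b <;> simp [branchSign]

lemma sqrt_mem_Icc {x : ℝ} (hx : x ∈ Icc (0 : ℝ) 5) :
    √(25 - 4 * x) ∈ Icc (√5) 5 := by
  refine ⟨Real.sqrt_le_sqrt (by linarith [hx.2]), ?_⟩
  rw [Real.sqrt_le_left (by norm_num)]
  linarith [hx.1]

lemma two_lt_sqrt_five : (2 : ℝ) < √5 := by
  rw [Real.lt_sqrt (by norm_num)]; norm_num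

lemma S_mem_Icc {x : ℝ} (b : Bool) (hx : x ∈ Icc (0 : ℝ) 5) :
    S (branchSign b) x ∈ Icc (0 : ℝ) 5 := by
  have h := sqrt_mem_Icc hx
  have h2 := two_lt_sqrt_five
  obtain ⟨h1, h3⟩ := h
  cases b <;> simp only [branchSign, S, mem_Icc] <;> constructor <;> norm_num <;> linarith

lemma abs_S_sub_S_mul (b : Bool) {x y : ℝ} (hx : x ∈ Icc (0 : ℝ) 5) (hy : y ∈ Icc (0 : ℝ) 5) :
    |S (branchSign b) x - S (branchSign b) y| * (√(25 - 4 * x) + √(25 - 4 * y)) =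
      2 * |x - y| := by
  have hX := Real.sq_sqrt (show 0 ≤ 25 - 4 * x by linarith [hx.2])
  have hY := Real.sq_sqrt (show 0 ≤ 25 - 4 * y by linarith [hy.2])
  have hpos : 0 ≤ √(25 - 4 * x) + √(25 - 4 * y) := by positivity
  have hS : S (branchSign b) x - S (branchSign b) y =
      branchSign b * ((√(25 - 4 * x) - √(25 - 4 * y)) / 2) := by
    simp only [S]; ring
  rw [hS, abs_mul, abs_branchSign, one_mul]
  nth_rewrite 1 [← abs_of_nonneg hpos]
  rw [← abs_mul, show (√(25 - 4 * x) - √(25 - 4 * y)) / 2 * (√(25 - 4 * x) + √(25 - 4 * y)) =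
    -2 * (x - y) by nlinarith, abs_mul]
  norm_num

lemma two_le_abs_S_sub_S {b c : Bool} (hbc : b ≠ c) {x y : ℝ} (hx : x ∈ Icc (0 : ℝ) 5)
    (hy : y ∈ Icc (0 : ℝ) 5) : 2 ≤ |S (branchSign b) x - S (branchSign c) y| := by
  have h2 := two_lt_sqrt_five
  have h3 := (sqrt_mem_Icc hx).1
  have h4 := (sqrt_mem_Icc hy).1
  rw [le_abs]
  cases b <;> cases c <;> simp only [branchSign, S, ne_eq, not_true_eq_false] at *
  · right; norm_num; linarith
  · left; norm_num; linarith

lemma abs_S_sub_S_le (b : Bool) {x y : ℝ} (hx : x ∈ Icc (0 : ℝ) 5) (hy : y ∈ Icc (0 : ℝ) 5) :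
    |S (branchSign b) x - S (branchSign b) y| ≤ |x - y| / 2 := by
  have h := abs_S_sub_S_mul b hx hy
  have h2 := two_lt_sqrt_five
  have h3 := (sqrt_mem_Icc hx).1
  have h4 := (sqrt_mem_Icc hy).1
  have h5 := abs_nonneg (S (branchSign b) x - S (branchSign b) y)
  nlinarith

lemma le_abs_S_sub_S (b : Bool) {x y : ℝ} (hx : x ∈ Icc (0 : ℝ) 5) (hy : y ∈ Icc (0 : ℝ) 5) :
    |x - y| / 5 ≤ |S (branchSign b) x - S (branchSign b) y| := by
  have h := abs_S_sub_S_mul b hx hy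
  have h3 := (sqrt_mem_Icc hx).2
  have h4 := (sqrt_mem_Icc hy).2
  have h5 := abs_nonneg (S (branchSign b) x - S (branchSign b) y)
  nlinarith

lemma sqrt_le_exp_mul_sqrt {x z δ : ℝ} (hx : x ∈ Icc (0 : ℝ) 5) (hz : z ∈ Icc (0 : ℝ) 5)
    (h : |x - z| ≤ δ) : √(25 - 4 * z) ≤ Real.exp (2 / 5 * δ) * √(25 - 4 * x) := by
  have hX := Real.sq_sqrt (show 0 ≤ 25 - 4 * x by linarith [hx.2])
  have hZ := Real.sq_sqrt (show 0 ≤ 25 - 4 * z by linarith [hz.2])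
  have h5 : √5 ^ 2 = 5 := Real.sq_sqrt (by norm_num)
  have h2 := two_lt_sqrt_five
  have h3 := (sqrt_mem_Icc hx).1
  have h4 := (sqrt_mem_Icc hz).1
  have he := Real.add_one_le_exp (2 / 5 * δ)
  have hδ : 0 ≤ δ := (abs_nonneg _).trans h
  set X := √(25 - 4 * x)
  set Z := √(25 - 4 * z)
  have key : Z ≤ (2 / 5 * δ + 1) * X := by
    have h6 : (Z - X) * (Z + X) ≤ 4 * δ := by nlinarith [le_abs_self (x - z)]
    by_contra hcon
    push Not at hcon
    have h7 : 2 / 5 * δ * X < Z - X := by linarith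
    have h9 : 5 ≤ X * X := by nlinarith
    have h8 : 2 / 5 * δ * X * (Z + X) < (Z - X) * (Z + X) :=
      mul_lt_mul_of_pos_right h7 (by linarith)
    have h10 : 2 * 5 ≤ X * (Z + X) := by nlinarith
    nlinarith
  exact key.trans (mul_le_mul_of_nonneg_right he (by linarith))

lemma abs_S_sub_S_le_exp (b : Bool) {x y z δ : ℝ} (hx : x ∈ Icc (0 : ℝ) 5)
    (hy : y ∈ Icc (0 : ℝ) 5) (hz : z ∈ Icc (0 : ℝ) 5) (hxz : |x - z| ≤ δ) (hyz : |y - z| ≤ δ) :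
    |S (branchSign b) x - S (branchSign b) y| ≤
      (√(25 - 4 * z))⁻¹ * Real.exp (2 / 5 * δ) * |x - y| := by
  have h := abs_S_sub_S_mul b hx hy
  have h2 := two_lt_sqrt_five
  have h1 := sqrt_le_exp_mul_sqrt hx hz hxz
  have h3 := sqrt_le_exp_mul_sqrt hy hz hyz
  have h4 := (sqrt_mem_Icc hz).1
  have h5 := abs_nonneg (S (branchSign b) x - S (branchSign b) y)
  have hZ : 0 < √(25 - 4 * z) := by linarith
  rw [mul_assoc, ← div_eq_inv_mul, le_div_iff₀ hZ]
  nlinarith [Real.exp_pos (2 / 5 * δ)]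

lemma le_exp_abs_S_sub_S (b : Bool) {x y z δ : ℝ} (hx : x ∈ Icc (0 : ℝ) 5)
    (hy : y ∈ Icc (0 : ℝ) 5) (hz : z ∈ Icc (0 : ℝ) 5) (hxz : |x - z| ≤ δ) (hyz : |y - z| ≤ δ) :
    (√(25 - 4 * z))⁻¹ * Real.exp (-(2 / 5 * δ)) * |x - y| ≤
      |S (branchSign b) x - S (branchSign b) y| := by
  have h := abs_S_sub_S_mul b hx hy
  have h2 := two_lt_sqrt_five
  have h1 := sqrt_le_exp_mul_sqrt hz hx (abs_sub_comm x z ▸ hxz)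
  have h3 := sqrt_le_exp_mul_sqrt hz hy (abs_sub_comm y z ▸ hyz)
  have h4 := (sqrt_mem_Icc hz).1
  have h5 := abs_nonneg (S (branchSign b) x - S (branchSign b) y)
  have hZ : 0 < √(25 - 4 * z) := by linarith
  rw [mul_assoc, ← div_eq_inv_mul, div_le_iff₀ hZ, Real.exp_neg, ← div_eq_inv_mul,
    div_le_iff₀ (Real.exp_pos _)]
  nlinarith [Real.exp_pos (2 / 5 * δ)]

/-! ### Iterated function systems obtained by composing branches -/

/-- The compositions of `n` inverse branches, with their derivatives at `0` up to sign. -/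
structure BranchSystem (n : ℕ) where
  /-- The index type of the compositions. -/
  ι : Type
  [fintype : Fintype ι]
  /-- The compositions. -/
  g : ι → ℝ → ℝ
  /-- The absolute value of the derivative at `0`. -/
  D : ι → ℝ
  D_pos : ∀ i, 0 < D i
  nonempty : Nonempty ι
  nontrivial : n ≠ 0 → Nontrivial ι
  mem : ∀ i, ∀ x ∈ Icc (0 : ℝ) 5, g i x ∈ Icc (0 : ℝ) 5
  close : ∀ i, ∀ x ∈ Icc (0 : ℝ) 5, ∀ y ∈ Icc (0 : ℝ) 5, |g i x - g i y| ≤ 5 / 2 ^ n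
  upper : ∀ i, ∀ x ∈ Icc (0 : ℝ) 5, ∀ y ∈ Icc (0 : ℝ) 5,
    |g i x - g i y| ≤ D i * Real.exp (4 - 4 / 2 ^ n) * |x - y|
  lower : ∀ i, ∀ x ∈ Icc (0 : ℝ) 5, ∀ y ∈ Icc (0 : ℝ) 5,
    D i * Real.exp (-(4 - 4 / 2 ^ n)) * |x - y| ≤ |g i x - g i y|
  separated : ∀ i j, i ≠ j → ∀ x ∈ Icc (0 : ℝ) 5, ∀ y ∈ Icc (0 : ℝ) 5,
    1 / 5 ^ n ≤ |g i x - g j y|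
  image_eq : ∀ J : Set ℝ, J = S (-1) '' J ∪ S 1 '' J → J = ⋃ i, g i '' J
  sum_le : ∀ (f : ℝ → ℝ) (s q : ℝ), 0 ≤ q → (∀ x ∈ Icc (0 : ℝ) 5,
    (√(25 - 4 * x))⁻¹ ^ s * (f (S 1 x) + f (S (-1) x)) ≤ q * f x) →
    ∑ i, D i ^ s * f (g i 0) ≤ q ^ n * f 0
  le_sum : ∀ (f : ℝ → ℝ) (s q : ℝ), 0 ≤ q → (∀ x ∈ Icc (0 : ℝ) 5,
    q * f x ≤ (√(25 - 4 * x))⁻¹ ^ s * (f (S 1 x) + f (S (-1) x))) →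
    q ^ n * f 0 ≤ ∑ i, D i ^ s * f (g i 0)

attribute [instance] BranchSystem.fintype

/-- The trivial system, consisting of the identity. -/
def BranchSystem.zero : BranchSystem 0 where
  ι := Unit
  g _ x := x
  D _ := 1
  D_pos _ := one_pos
  nonempty := ⟨()⟩
  nontrivial h := absurd rfl h
  mem _ _ h := h
  close _ x hx y hy := by
    simp only [pow_zero, div_one, abs_le]
    constructor <;> linarith [hx.1, hx.2, hy.1, hy.2]
  upper _ x _ y _ := by simp
  lower _ x _ y _ := by simp
  separated i j h := absurd rfl h
  image_eq J _ := by simp only [image_id']; exact (iUnion_const J).symm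
  sum_le f s q _ _ := by simp
  le_sum f s q _ _ := by simp

/-- The system obtained by composing each map with each branch on the left. -/
noncomputable def BranchSystem.succ {n : ℕ} (B : BranchSystem n) : BranchSystem (n + 1) where
  ι := Bool × B.ι
  g p x := S (branchSign p.1) (B.g p.2 x)
  D p := (√(25 - 4 * B.g p.2 0))⁻¹ * B.D p.2
  D_pos p := by
    have h := (sqrt_mem_Icc (B.mem p.2 0 (by simp))).1
    have h2 := two_lt_sqrt_five
    have : 0 < √(25 - 4 * B.g p.2 0) := by linarith
    have := B.D_pos p.2
    positivity
  nonempty := by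
    have := B.nonempty
    infer_instance
  nontrivial _ := by
    have := B.nonempty
    infer_instance
  mem p x hx := S_mem_Icc p.1 (B.mem p.2 x hx)
  close p x hx y hy := by
    have h1 := abs_S_sub_S_le p.1 (B.mem p.2 x hx) (B.mem p.2 y hy)
    have h2 := B.close p.2 x hx y hy
    calc _ ≤ |B.g p.2 x - B.g p.2 y| / 2 := h1
      _ ≤ 5 / 2 ^ n / 2 := by linarith
      _ = _ := by rw [pow_succ]; field_simp
  upper p x hx y hy := by
    have h0 : (0 : ℝ) ∈ Icc (0 : ℝ) 5 := by simp
    have h1 := abs_S_sub_S_le_exp p.1 (B.mem p.2 x hx) (B.mem p.2 y hy) (B.mem p.2 0 h0)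
      (B.close p.2 x hx 0 h0) (B.close p.2 y hy 0 h0)
    have h2 := B.upper p.2 x hx y hy
    refine h1.trans ((mul_le_mul_of_nonneg_left h2 (by positivity)).trans_eq ?_)
    have : Real.exp (4 - 4 / 2 ^ (n + 1)) =
        Real.exp (2 / 5 * (5 / 2 ^ n)) * Real.exp (4 - 4 / 2 ^ n) := by
      rw [← Real.exp_add, pow_succ]; congr 1; field_simp; ring
    rw [this]; ring
  lower p x hx y hy := by
    have h0 : (0 : ℝ) ∈ Icc (0 : ℝ) 5 := by simp
    have h1 := le_exp_abs_S_sub_S p.1 (B.mem p.2 x hx) (B.mem p.2 y hy) (B.mem p.2 0 h0)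
      (B.close p.2 x hx 0 h0) (B.close p.2 y hy 0 h0)
    have h2 := B.lower p.2 x hx y hy
    refine ((mul_le_mul_of_nonneg_left h2 (by positivity)).trans_eq' ?_).trans h1
    have : Real.exp (-(4 - 4 / 2 ^ (n + 1))) =
        Real.exp (-(2 / 5 * (5 / 2 ^ n))) * Real.exp (-(4 - 4 / 2 ^ n)) := by
      rw [← Real.exp_add, pow_succ]; congr 1; field_simp; ring
    rw [this]; ring
  separated p r hpr x hx y hy := by
    rcases eq_or_ne p.1 r.1 with h | h
    · have h2 : p.2 ≠ r.2 := fun h' => hpr (Prod.ext h h')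
      have h3 := B.separated p.2 r.2 h2 x hx y hy
      have h4 := le_abs_S_sub_S p.1 (B.mem p.2 x hx) (B.mem r.2 y hy)
      rw [← h]
      calc (1 : ℝ) / 5 ^ (n + 1) = 1 / 5 ^ n / 5 := by rw [pow_succ]; field_simp
        _ ≤ _ := by linarith
    · refine le_trans ?_ (two_le_abs_S_sub_S h (B.mem p.2 x hx) (B.mem r.2 y hy))
      rw [div_le_iff₀ (by positivity)]
      have : (1 : ℝ) ≤ 5 ^ (n + 1) := one_le_pow₀ (by norm_num)
      linarith
  image_eq J hJ := by
    have h1 := B.image_eq J hJ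
    conv_lhs => rw [hJ]
    ext x
    simp only [mem_union, mem_image, mem_iUnion, Prod.exists, Bool.exists_bool, branchSign]
    simp only [Bool.false_eq_true, if_false, if_true]
    have key : ∀ ε : ℝ, (∃ y ∈ J, S ε y = x) ↔ ∃ i, ∃ y ∈ J, S ε (B.g i y) = x := by
      intro ε
      constructor
      · rintro ⟨y, hy, rfl⟩
        rw [h1] at hy
        simp only [mem_iUnion, mem_image] at hy
        obtain ⟨i, z, hz, rfl⟩ := hy
        exact ⟨i, z, hz, rfl⟩
      · rintro ⟨i, z, hz, rfl⟩
        refine ⟨B.g i z, ?_, rfl⟩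
        rw [h1]
        exact mem_iUnion.2 ⟨i, z, hz, rfl⟩
    rw [key, key]
  sum_le f s q hq h := by
    have h0 := B.sum_le f s q hq h
    rw [Fintype.sum_prod_type_right]
    calc _ ≤ ∑ i, q * (B.D i ^ s * f (B.g i 0)) := by
          refine Finset.sum_le_sum fun i _ => ?_
          have h3 := h _ (B.mem i 0 (by simp))
          have h4 : 0 ≤ B.D i ^ s := Real.rpow_nonneg (B.D_pos i).le s
          simp only [Fintype.sum_bool, branchSign, if_true, Bool.false_eq_true, if_false]
          rw [Real.mul_rpow (by positivity) (B.D_pos i).le]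
          nlinarith
      _ ≤ _ := by
          rw [← Finset.mul_sum, pow_succ', mul_assoc]
          exact mul_le_mul_of_nonneg_left h0 hq
  le_sum f s q hq h := by
    have h0 := B.le_sum f s q hq h
    rw [Fintype.sum_prod_type_right]
    calc _ ≤ ∑ i, q * (B.D i ^ s * f (B.g i 0)) := by
          rw [← Finset.mul_sum, pow_succ', mul_assoc]
          exact mul_le_mul_of_nonneg_left h0 hq
      _ ≤ _ := by
          refine Finset.sum_le_sum fun i _ => ?_
          have h3 := h _ (B.mem i 0 (by simp))
          have h4 : 0 ≤ B.D i ^ s := Real.rpow_nonneg (B.D_pos i).le s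
          simp only [Fintype.sum_bool, branchSign, if_true, Bool.false_eq_true, if_false]
          rw [Real.mul_rpow (by positivity) (B.D_pos i).le]
          nlinarith

lemma nonempty_branchSystem (n : ℕ) : Nonempty (BranchSystem n) := by
  induction n with
  | zero => exact ⟨.zero⟩
  | succ n ih => exact ih.map .succ

/-! ### Dimension bounds for self-covering sets -/

/-- A bounded set covered by its images under Lipschitz maps whose constants satisfy
`∑ R i ^ s < 1` has dimension at most `s`. -/
lemma dimH_le_of_sum_rpow_lt_one {ι : Type} [Fintype ι] {J : Set ℝ} {g : ι → ℝ → ℝ} {R : ι → ℝ}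
    {s : ℝ} (hs : 0 < s) (hbdd : Bornology.IsBounded J) (hR : ∀ i, 0 ≤ R i)
    (hcover : J ⊆ ⋃ i, g i '' J)
    (hg : ∀ i, ∀ x ∈ J, ∀ y ∈ J, |g i x - g i y| ≤ R i * |x - y|)
    (hsum : ∑ i, R i ^ s < 1) : dimH J ≤ ENNReal.ofReal s := by
  set Q := ∑ i, R i ^ s with hQ
  have hQ0 : 0 ≤ Q := Finset.sum_nonneg fun i _ => Real.rpow_nonneg (hR i) s
  obtain ⟨C, hC0, hC⟩ : ∃ C : ℝ, 0 ≤ C ∧ Metric.diam J ≤ C :=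
    ⟨Metric.diam J, Metric.diam_nonneg, le_rfl⟩
  have key : ∀ k : ℕ, ∃ (α : Type) (_ : Fintype α) (t : α → Set ℝ), J ⊆ ⋃ a, t a ∧
      (∀ a, t a ⊆ J) ∧ ∑ a, Metric.diam (t a) ^ s ≤ Q ^ k * C ^ s := by
    intro k
    induction k with
    | zero =>
      refine ⟨Unit, inferInstance, fun _ => J, (iUnion_const J).symm.subset,
        fun _ => subset_rfl, ?_⟩
      simpa using Real.rpow_le_rpow Metric.diam_nonneg hC hs.le
    | succ k ih =>
      obtain ⟨α, hα, t, ht1, ht2, ht3⟩ := ih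
      refine ⟨ι × α, inferInstance, fun p => g p.1 '' t p.2 ∩ J, ?_,
        fun _ => inter_subset_right, ?_⟩
      · intro x hx
        obtain ⟨i, y, hy, rfl⟩ := mem_iUnion.1 (hcover hx)
        obtain ⟨a, ha⟩ := mem_iUnion.1 (ht1 hy)
        exact mem_iUnion.2 ⟨(i, a), ⟨y, ha, rfl⟩, hx⟩
      · rw [Fintype.sum_prod_type]
        calc _ ≤ ∑ i, ∑ a, R i ^ s * Metric.diam (t a) ^ s := by
              refine Finset.sum_le_sum fun i _ => Finset.sum_le_sum fun a _ => ?_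
              rw [← Real.mul_rpow (hR i) Metric.diam_nonneg]
              refine Real.rpow_le_rpow Metric.diam_nonneg ?_ hs.le
              refine Metric.diam_le_of_forall_dist_le
                (mul_nonneg (hR i) Metric.diam_nonneg) ?_
              rintro _ ⟨⟨x, hx, rfl⟩, -⟩ _ ⟨⟨y, hy, rfl⟩, -⟩
              rw [Real.dist_eq]
              refine (hg i x (ht2 a hx) y (ht2 a hy)).trans ?_
              exact mul_le_mul_of_nonneg_left
                (Metric.dist_le_diam_of_mem (hbdd.subset (ht2 a)) hx hy) (hR i)
          _ = Q * ∑ a, Metric.diam (t a) ^ s := by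
              rw [hQ, Finset.sum_mul]
              exact Finset.sum_congr rfl fun i _ => (Finset.mul_sum _ _ _).symm
          _ ≤ _ := by
              rw [pow_succ', mul_assoc]
              exact mul_le_mul_of_nonneg_left ht3 hQ0
  choose α hα t ht1 ht2 ht3 using key
  have htend : Filter.Tendsto (fun k : ℕ => Q ^ k * C ^ s) Filter.atTop (nhds 0) := by
    simpa using (tendsto_pow_atTop_nhds_zero_of_lt_one hQ0 hsum).mul_const (C ^ s)
  have hdiam : ∀ k a, Metric.ediam (t k a) = ENNReal.ofReal (Metric.diam (t k a)) := fun k a =>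
    (ENNReal.ofReal_toReal (hbdd.subset (ht2 k a)).ediam_ne_top).symm
  have hmeas : μH[s] J ≤ 0 := by
    refine (Measure.hausdorffMeasure_le_liminf_sum s J (l := Filter.atTop)
      (fun k => ENNReal.ofReal ((Q ^ k * C ^ s) ^ s⁻¹)) ?_ t ?_ (.of_forall ht1)).trans ?_
    · have h := (htend.rpow_const (p := s⁻¹) (.inr (by positivity)))
      rw [Real.zero_rpow (by positivity)] at h
      simpa using ENNReal.tendsto_ofReal h
    · refine .of_forall fun k a => ?_
      rw [hdiam]
      refine ENNReal.ofReal_le_ofReal ?_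
      rw [Real.le_rpow_inv_iff_of_pos Metric.diam_nonneg (by positivity) hs]
      refine le_trans ?_ (ht3 k)
      exact Finset.single_le_sum (f := fun a => Metric.diam (t k a) ^ s)
        (fun a _ => Real.rpow_nonneg Metric.diam_nonneg s) (Finset.mem_univ a)
    · have h0 : Filter.Tendsto (fun k => ∑ a, Metric.ediam (t k a) ^ s) Filter.atTop (nhds 0) := by
        have h := ENNReal.tendsto_ofReal htend
        rw [ENNReal.ofReal_zero] at h
        refine tendsto_of_tendsto_of_tendsto_of_le_of_le tendsto_const_nhds h
          (fun _ => zero_le) fun k => ?_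
        calc _ = ENNReal.ofReal (∑ a, Metric.diam (t k a) ^ s) := by
              rw [ENNReal.ofReal_sum_of_nonneg
                fun a _ => Real.rpow_nonneg Metric.diam_nonneg s]
              refine Finset.sum_congr rfl fun a _ => ?_
              rw [hdiam, ENNReal.ofReal_rpow_of_nonneg Metric.diam_nonneg hs.le]
          _ ≤ _ := ENNReal.ofReal_le_ofReal (ht3 k)
      exact h0.liminf_eq.le
  have := dimH_le_of_hausdorffMeasure_ne_top (s := J) (d := s.toNNReal) (by
    rw [Real.coe_toNNReal s hs.le, nonpos_iff_eq_zero.1 hmeas]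
    exact ENNReal.zero_ne_top)
  exact this

/-- A set containing uniformly separated images of itself under maps expanding distances by at
least the factors `r i`, where `∑ r i ^ s ≥ 1`, cannot be efficiently covered by finitely many
sets. -/
lemma le_sum_diam_rpow_of_one_le_sum {ι κ : Type} [Fintype ι] [Nontrivial ι] {J : Set ℝ}
    {g : ι → ℝ → ℝ} {r : ι → ℝ} {s γ : ℝ} (hs : 0 < s) (hγ : 0 < γ) (hne : J.Nonempty)
    (hbdd : Bornology.IsBounded J) (hr : ∀ i, 0 < r i) (hmaps : ∀ i, MapsTo (g i) J J)
    (hg : ∀ i, ∀ x ∈ J, ∀ y ∈ J, r i * |x - y| ≤ |g i x - g i y|)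
    (hsep : ∀ i j, i ≠ j → ∀ x ∈ J, ∀ y ∈ J, γ ≤ |g i x - g j y|)
    (hsum : 1 ≤ ∑ i, r i ^ s) (T : Finset κ) (U : κ → Set ℝ) (hU : J ⊆ ⋃ k ∈ T, U k) :
    γ ^ s ≤ ∑ k ∈ T, Metric.diam (U k ∩ J) ^ s := by
  classical
  have hnonneg : ∀ (U : κ → Set ℝ) k, 0 ≤ Metric.diam (U k ∩ J) ^ s := fun U k =>
    Real.rpow_nonneg Metric.diam_nonneg s
  induction hn : T.card using Nat.strong_induction_on generalizing T U with
  | _ n ih =>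
  subst hn
  by_cases hbig : ∃ k ∈ T, γ ≤ Metric.diam (U k ∩ J)
  · obtain ⟨k, hk, hγk⟩ := hbig
    exact (Real.rpow_le_rpow hγ.le hγk hs.le).trans
      (Finset.single_le_sum (f := fun k => Metric.diam (U k ∩ J) ^ s)
        (fun k _ => hnonneg U k) hk)
  push Not at hbig
  let T' : ι → Finset κ := fun i => T.filter fun k => (U k ∩ g i '' J).Nonempty
  have huniq : ∀ k ∈ T, ∀ i j, (U k ∩ g i '' J).Nonempty → (U k ∩ g j '' J).Nonempty →
      i = j := by
    rintro k hk i j ⟨_, hx1, x, hx, rfl⟩ ⟨_, hy1, y, hy, rfl⟩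
    by_contra hij
    refine (hbig k hk).not_ge ((hsep i j hij x hx y hy).trans ?_)
    rw [← Real.dist_eq]
    exact Metric.dist_le_diam_of_mem (hbdd.subset inter_subset_right)
      ⟨hx1, hmaps i hx⟩ ⟨hy1, hmaps j hy⟩
  have hT'ne : ∀ i, (T' i).Nonempty := by
    intro i
    obtain ⟨x, hx⟩ := hne
    obtain ⟨k, hk, hxk⟩ := mem_iUnion₂.1 (hU (hmaps i hx))
    exact ⟨k, Finset.mem_filter.2 ⟨hk, _, hxk, x, hx, rfl⟩⟩
  have hdisj : ((Finset.univ : Finset ι) : Set ι).PairwiseDisjoint T' := by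
    intro i _ j _ hij
    refine Finset.disjoint_left.2 fun k hki hkj => hij ?_
    obtain ⟨hk, h1⟩ := Finset.mem_filter.1 hki
    exact huniq k hk i j h1 (Finset.mem_filter.1 hkj).2
  have hlt : ∀ i, (T' i).card < T.card := by
    intro i
    refine Finset.card_lt_card (Finset.filter_ssubset.2 ?_)
    obtain ⟨j, hj⟩ := exists_ne i
    obtain ⟨k, hk⟩ := hT'ne j
    obtain ⟨hkT, hk1⟩ := Finset.mem_filter.1 hk
    exact ⟨k, hkT, fun h => hj (huniq k hkT j i hk1 h)⟩
  have hpiece : ∀ i, r i ^ s * γ ^ s ≤ ∑ k ∈ T' i, Metric.diam (U k ∩ J) ^ s := by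
    intro i
    have h1 := ih _ (hlt i) (T' i) (fun k => g i ⁻¹' U k) (by
      intro x hx
      obtain ⟨k, hk, hxk⟩ := mem_iUnion₂.1 (hU (hmaps i hx))
      exact mem_iUnion₂.2 ⟨k, Finset.mem_filter.2 ⟨hk, _, hxk, x, hx, rfl⟩, hxk⟩) rfl
    refine (mul_le_mul_of_nonneg_left h1 (Real.rpow_nonneg (hr i).le s)).trans ?_
    rw [Finset.mul_sum]
    refine Finset.sum_le_sum fun k _ => ?_
    rw [← Real.mul_rpow (hr i).le Metric.diam_nonneg]
    refine Real.rpow_le_rpow (mul_nonneg (hr i).le Metric.diam_nonneg) ?_ hs.le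
    rw [mul_comm, ← le_div_iff₀ (hr i)]
    refine Metric.diam_le_of_forall_dist_le (div_nonneg Metric.diam_nonneg (hr i).le) ?_
    rintro x ⟨hx1, hx⟩ y ⟨hy1, hy⟩
    rw [le_div_iff₀ (hr i), mul_comm, Real.dist_eq]
    refine (hg i x hx y hy).trans ?_
    rw [← Real.dist_eq]
    exact Metric.dist_le_diam_of_mem (hbdd.subset inter_subset_right)
      ⟨hx1, hmaps i hx⟩ ⟨hy1, hmaps i hy⟩
  calc γ ^ s ≤ (∑ i, r i ^ s) * γ ^ s := le_mul_of_one_le_left (by positivity) hsum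
    _ = ∑ i, r i ^ s * γ ^ s := Finset.sum_mul _ _ _
    _ ≤ ∑ i, ∑ k ∈ T' i, Metric.diam (U k ∩ J) ^ s := Finset.sum_le_sum fun i _ => hpiece i
    _ = ∑ k ∈ Finset.univ.biUnion T', Metric.diam (U k ∩ J) ^ s := (Finset.sum_biUnion hdisj).symm
    _ ≤ _ := by
      refine Finset.sum_le_sum_of_subset_of_nonneg ?_ fun k _ _ => hnonneg U k
      exact Finset.biUnion_subset.2 fun i _ => Finset.filter_subset _ _

/-- A compact set for which finite covers have `s`-dimensional size bounded below has dimension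
at least `s`. -/
lemma le_dimH_of_le_sum_diam_rpow {J : Set ℝ} {s c : ℝ} (hs : 0 < s) (hc : 0 < c)
    (hJ : IsCompact J)
    (h : ∀ (T : Finset ℕ) (U : ℕ → Set ℝ), J ⊆ ⋃ k ∈ T, U k →
      c ≤ ∑ k ∈ T, Metric.diam (U k ∩ J) ^ s) : ENNReal.ofReal s ≤ dimH J := by
  have hmeas : ENNReal.ofReal (c / 2) ≤ μH[s] J := by
    rw [Measure.hausdorffMeasure_apply]
    refine le_iSup₂_of_le 1 one_pos (le_iInf fun t => le_iInf fun ht => le_iInf fun _ => ?_)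
    have hb : ∀ k, Bornology.IsBounded (t k ∩ J) := fun k => hJ.isBounded.subset inter_subset_right
    have hρ : ∀ k, ∃ ρ > 0, (Metric.diam (t k ∩ J) + 2 * ρ) ^ s ≤
        Metric.diam (t k ∩ J) ^ s + c / 2 / 2 / 2 ^ k := by
      intro k
      have h1 : Filter.Tendsto (fun ρ : ℝ => (Metric.diam (t k ∩ J) + 2 * ρ) ^ s)
          (nhdsWithin 0 (Ioi 0)) (nhds (Metric.diam (t k ∩ J) ^ s)) := by
        have h2 : ContinuousAt (fun ρ : ℝ => (Metric.diam (t k ∩ J) + 2 * ρ) ^ s) 0 :=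
          ContinuousAt.rpow_const (by fun_prop) (.inr hs.le)
        have h3 := h2.tendsto
        simp only [mul_zero, add_zero] at h3
        exact h3.mono_left nhdsWithin_le_nhds
      have h4 : Metric.diam (t k ∩ J) ^ s < Metric.diam (t k ∩ J) ^ s + c / 2 / 2 / 2 ^ k :=
        lt_add_of_pos_right _ (by positivity)
      obtain ⟨ρ, hρ1, hρ2⟩ := ((h1.eventually (gt_mem_nhds h4)).and self_mem_nhdsWithin).exists
      exact ⟨ρ, hρ2, hρ1.le⟩
    choose ρ hρ0 hρ using hρ
    obtain ⟨T, hT⟩ := hJ.elim_finite_subcover (fun k => Metric.thickening (ρ k) (t k ∩ J))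
      (fun k => Metric.isOpen_thickening) (by
        intro x hx
        obtain ⟨k, hk⟩ := mem_iUnion.1 (ht hx)
        exact mem_iUnion.2 ⟨k, Metric.self_subset_thickening (hρ0 k) _ ⟨hk, hx⟩⟩)
    have h1 := h T _ hT
    have h2 : ∑ k ∈ T, Metric.diam (Metric.thickening (ρ k) (t k ∩ J) ∩ J) ^ s ≤
        ∑ k ∈ T, (Metric.diam (t k ∩ J) ^ s + c / 2 / 2 / 2 ^ k) := by
      refine Finset.sum_le_sum fun k _ => le_trans ?_ (hρ k)
      refine Real.rpow_le_rpow Metric.diam_nonneg ?_ hs.le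
      refine (Metric.diam_mono inter_subset_left (hb k).thickening).trans ?_
      exact Metric.diam_thickening_le _ (hρ0 k).le
    have h3 : ∑ k ∈ T, c / 2 / 2 / 2 ^ k ≤ c / 2 :=
      (summable_geometric_two' (c / 2)).sum_le_tsum T (fun k _ => by positivity) |>.trans_eq
        (tsum_geometric_two' (c / 2))
    rw [Finset.sum_add_distrib] at h2
    calc ENNReal.ofReal (c / 2) ≤ ENNReal.ofReal (∑ k ∈ T, Metric.diam (t k ∩ J) ^ s) :=
          ENNReal.ofReal_le_ofReal (by linarith)
      _ = ∑ k ∈ T, ENNReal.ofReal (Metric.diam (t k ∩ J) ^ s) :=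
          ENNReal.ofReal_sum_of_nonneg fun k _ => Real.rpow_nonneg Metric.diam_nonneg s
      _ ≤ ∑ k ∈ T, ⨆ _ : (t k).Nonempty, Metric.ediam (t k) ^ s := by
          refine Finset.sum_le_sum fun k _ => ?_
          rcases (t k).eq_empty_or_nonempty with h0 | h0
          · simp [h0, Real.zero_rpow hs.ne']
          · rw [iSup_pos h0, ← ENNReal.ofReal_rpow_of_nonneg Metric.diam_nonneg hs.le]
            refine ENNReal.rpow_le_rpow ?_ hs.le
            rw [Metric.diam, ENNReal.ofReal_toReal (hb k).ediam_ne_top]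
            exact Metric.ediam_mono inter_subset_left
      _ ≤ _ := ENNReal.sum_le_tsum T
  refine le_dimH_of_hausdorffMeasure_ne_zero (s := J) (d := s.toNNReal) ?_
  rw [Real.coe_toNNReal s hs.le]
  exact ((ENNReal.ofReal_pos.2 (half_pos hc)).trans_le hmeas).ne'

/-! ### Dimension bounds from sub- and superinvariant functions of the transfer operator -/

lemma dimH_le_of_transfer_le {J : Set ℝ} (hsub : J ⊆ Icc 0 5)
    (heq : J = S (-1) '' J ∪ S 1 '' J) {f : ℝ → ℝ} {s q m : ℝ} (hs : 0 < s) (hq0 : 0 ≤ q)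
    (hq : q < 1) (hm : 0 < m) (hf : ∀ x ∈ Icc (0 : ℝ) 5, m ≤ f x)
    (h : ∀ x ∈ Icc (0 : ℝ) 5,
      (√(25 - 4 * x))⁻¹ ^ s * (f (S 1 x) + f (S (-1) x)) ≤ q * f x) :
    dimH J ≤ ENNReal.ofReal s := by
  obtain ⟨n, hn⟩ : ∃ n : ℕ, q ^ n * (f 0 * (Real.exp 4 ^ s / m)) < 1 := by
    have := (tendsto_pow_atTop_nhds_zero_of_lt_one hq0 hq).mul_const (f 0 * (Real.exp 4 ^ s / m))
    rw [zero_mul] at this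
    exact (this.eventually (gt_mem_nhds one_pos)).exists
  obtain ⟨B⟩ := nonempty_branchSystem n
  refine dimH_le_of_sum_rpow_lt_one (g := B.g) (R := fun i => B.D i * Real.exp 4) hs
    (Metric.isBounded_Icc 0 5 |>.subset hsub)
    (fun i => mul_nonneg (B.D_pos i).le (Real.exp_pos _).le) (B.image_eq J heq).subset ?_ ?_
  · intro i x hx y hy
    refine (B.upper i x (hsub hx) y (hsub hy)).trans ?_
    refine mul_le_mul_of_nonneg_right (mul_le_mul_of_nonneg_left ?_ (B.D_pos i).le) (abs_nonneg _)
    exact Real.exp_le_exp.2 (sub_le_self _ (by positivity))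
  · refine lt_of_le_of_lt ?_ hn
    calc ∑ i, (B.D i * Real.exp 4) ^ s
        ≤ ∑ i, B.D i ^ s * f (B.g i 0) * (Real.exp 4 ^ s / m) := by
          refine Finset.sum_le_sum fun i _ => ?_
          rw [Real.mul_rpow (B.D_pos i).le (Real.exp_pos _).le, mul_assoc]
          refine mul_le_mul_of_nonneg_left ?_ (Real.rpow_nonneg (B.D_pos i).le s)
          have h1 := hf _ (B.mem i 0 (by simp))
          have h2 : 0 < Real.exp 4 ^ s := Real.rpow_pos_of_pos (Real.exp_pos _) s
          rw [mul_div_assoc', le_div_iff₀ hm, mul_comm]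
          exact mul_le_mul_of_nonneg_right h1 h2.le
      _ ≤ q ^ n * f 0 * (Real.exp 4 ^ s / m) := by
          rw [← Finset.sum_mul]
          exact mul_le_mul_of_nonneg_right (B.sum_le f s q hq0 h) (by positivity)
      _ = _ := by ring

lemma le_dimH_of_le_transfer {J : Set ℝ} (hsub : J ⊆ Icc 0 5) (hne : J.Nonempty)
    (hcl : IsClosed J) (heq : J = S (-1) '' J ∪ S 1 '' J) {f : ℝ → ℝ} {s q M : ℝ} (hs : 0 < s)
    (hq : 1 < q) (hf0 : 0 < f 0) (hM : 0 < M) (hf : ∀ x ∈ Icc (0 : ℝ) 5, f x ≤ M)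
    (h : ∀ x ∈ Icc (0 : ℝ) 5,
      q * f x ≤ (√(25 - 4 * x))⁻¹ ^ s * (f (S 1 x) + f (S (-1) x))) :
    ENNReal.ofReal s ≤ dimH J := by
  have hc : 0 < f 0 * (Real.exp (-4) ^ s / M) := by positivity
  obtain ⟨n, hn0, hn⟩ : ∃ n : ℕ, n ≠ 0 ∧ 1 ≤ q ^ n * (f 0 * (Real.exp (-4) ^ s / M)) := by
    have := (tendsto_pow_atTop_atTop_of_one_lt hq).atTop_mul_const hc
    obtain ⟨n, h1, h2⟩ :=
      ((this.eventually_ge_atTop 1).and (Filter.eventually_ne_atTop 0)).exists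
    exact ⟨n, h2, h1⟩
  obtain ⟨B⟩ := nonempty_branchSystem n
  have := B.nontrivial hn0
  have himage := B.image_eq J heq
  refine le_dimH_of_le_sum_diam_rpow hs (c := (1 / 5 ^ n) ^ s) (by positivity)
    (isCompact_Icc.of_isClosed_subset hcl hsub) fun T U hU => ?_
  refine le_sum_diam_rpow_of_one_le_sum (g := B.g) (r := fun i => B.D i * Real.exp (-4)) hs
    (by positivity) hne (Metric.isBounded_Icc 0 5 |>.subset hsub)
    (fun i => mul_pos (B.D_pos i) (Real.exp_pos _)) ?_ ?_ ?_ ?_ T U hU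
  · intro i x hx
    rw [himage]
    exact mem_iUnion.2 ⟨i, x, hx, rfl⟩
  · intro i x hx y hy
    refine le_trans ?_ (B.lower i x (hsub hx) y (hsub hy))
    refine mul_le_mul_of_nonneg_right (mul_le_mul_of_nonneg_left ?_ (B.D_pos i).le) (abs_nonneg _)
    exact Real.exp_le_exp.2 (neg_le_neg (sub_le_self _ (by positivity)))
  · exact fun i j hij x hx y hy => B.separated i j hij x (hsub hx) y (hsub hy)
  · refine hn.trans ?_
    calc q ^ n * (f 0 * (Real.exp (-4) ^ s / M)) = q ^ n * f 0 * (Real.exp (-4) ^ s / M) := by ring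
      _ ≤ ∑ i, B.D i ^ s * f (B.g i 0) * (Real.exp (-4) ^ s / M) := by
          rw [← Finset.sum_mul]
          exact mul_le_mul_of_nonneg_right (B.le_sum f s q (by linarith) h) (by positivity)
      _ ≤ _ := by
          refine Finset.sum_le_sum fun i _ => ?_
          rw [Real.mul_rpow (B.D_pos i).le (Real.exp_pos _).le, mul_assoc]
          refine mul_le_mul_of_nonneg_left ?_ (Real.rpow_nonneg (B.D_pos i).le s)
          have h1 := hf _ (B.mem i 0 (by simp))
          have h2 : 0 < Real.exp (-4) ^ s := Real.rpow_pos_of_pos (Real.exp_pos _) s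
          rw [mul_div_assoc', div_le_iff₀ hM, mul_comm]
          exact mul_le_mul_of_nonneg_left h1 h2.le

/-! ### Polynomials with integer coefficients as lists -/

namespace IntPoly

/-- Evaluation of the polynomial with coefficient list `p`, constant coefficient first. -/
noncomputable def eval : List ℤ → ℝ → ℝ
  | [], _ => 0
  | c :: p, x => c + x * eval p x

/-- Sum of polynomials. -/
def add : List ℤ → List ℤ → List ℤ
  | [], q => q
  | c :: p, [] => c :: p
  | c :: p, d :: q => (c + d) :: add p q

/-- Integer multiple of a polynomial. -/
def smul (a : ℤ) : List ℤ → List ℤ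
  | [] => []
  | c :: p => (a * c) :: smul a p

/-- Product of polynomials. -/
def mul : List ℤ → List ℤ → List ℤ
  | [], _ => []
  | c :: p, q => add (smul c q) (0 :: mul p q)

/-- Derivative of a polynomial, by the product rule for `c + X * p`. -/
def deriv : List ℤ → List ℤ
  | [] => []
  | _ :: p => add p (0 :: deriv p)

/-- Composition of polynomials. -/
def comp : List ℤ → List ℤ → List ℤ
  | [], _ => []
  | c :: p, q => add [c] (mul q (comp p q))

/-- Coefficients of even index. -/
def evens : List ℤ → List ℤ
  | [] => []
  | [c] => [c]
  | c :: _ :: p => c :: evens p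

/-- The product of `q` with `k + X`, plus the constant `c`. -/
def mulLinear (k : ℤ) : ℤ → List ℤ → List ℤ
  | c, [] => [c]
  | c, a :: q => (c + k * a) :: mulLinear k a q

/-- The polynomial `M ^ p.length * p ((k + X) / M)`. -/
def rescale (M : ℕ) (k : ℤ) : List ℤ → List ℤ
  | [] => []
  | c :: p => mulLinear k (c * (M ^ (p.length + 1) : ℕ)) (rescale M k p)

/-- Sum of the absolute values of the coefficients. -/
def norm : List ℤ → ℤ
  | [] => 0
  | c :: p => c.natAbs + norm p

/-- The constant coefficient exceeds the sum of the absolute values of the others. -/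
def dominant : List ℤ → Bool
  | [] => false
  | c :: p => decide (norm p < c)

/-- A sufficient condition for positivity on `[-5, 5]`, by subdivision into intervals of
length `2 / M`. -/
def positive (M : ℕ) (p : List ℤ) : Bool :=
  (List.range (5 * M)).all fun j => dominant (rescale M (2 * j + 1 - 5 * M) p)

lemma eval_add (p q : List ℤ) (x : ℝ) : eval (add p q) x = eval p x + eval q x := by
  induction p, q using add.induct <;> simp_all [add, eval]
  ring

lemma eval_smul (a : ℤ) (p : List ℤ) (x : ℝ) : eval (smul a p) x = a * eval p x := by
  induction p with
  | nil => simp [smul, eval]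
  | cons c p ih => simp only [smul, eval, ih]; push_cast; ring

lemma eval_mul (p q : List ℤ) (x : ℝ) : eval (mul p q) x = eval p x * eval q x := by
  induction p with
  | nil => simp [mul, eval]
  | cons c p ih => simp only [mul, eval, eval_add, eval_smul, ih]; push_cast; ring

lemma hasDerivAt_eval (p : List ℤ) (x : ℝ) : HasDerivAt (eval p) (eval (deriv p) x) x := by
  induction p with
  | nil => exact hasDerivAt_const x 0
  | cons c p ih =>
    have := ((hasDerivAt_id x).mul ih).const_add (c : ℝ)
    refine this.congr_deriv ?_
    simp [deriv, eval_add, eval]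

lemma eval_comp (p q : List ℤ) (x : ℝ) : eval (comp p q) x = eval p (eval q x) := by
  induction p with
  | nil => simp [comp, eval]
  | cons c p ih => simp [comp, eval, eval_add, eval_mul, ih]

lemma eval_add_eval_neg (p : List ℤ) (x : ℝ) :
    eval p x + eval p (-x) = 2 * eval (evens p) (x ^ 2) := by
  induction p using evens.induct with
  | case1 => simp [evens, eval]
  | case2 c => simp [evens, eval]; ring
  | case3 c d p ih => simp only [evens, eval]; linear_combination x ^ 2 * ih

lemma eval_mulLinear (k c : ℤ) (q : List ℤ) (x : ℝ) :
    eval (mulLinear k c q) x = c + (k + x) * eval q x := by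
  induction q generalizing c with
  | nil => simp [mulLinear, eval]
  | cons a q ih => simp only [mulLinear, eval, ih]; push_cast; ring

lemma eval_rescale {M : ℕ} (hM : M ≠ 0) (k : ℤ) (p : List ℤ) (x : ℝ) :
    eval (rescale M k p) x = M ^ p.length * eval p ((k + x) / M) := by
  induction p with
  | nil => simp [rescale, eval]
  | cons c p ih =>
    simp only [rescale, eval, eval_mulLinear, ih, List.length_cons]
    push_cast
    field_simp
    ring

lemma abs_eval_le_norm (p : List ℤ) {x : ℝ} (hx : |x| ≤ 1) : |eval p x| ≤ norm p := by
  induction p with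
  | nil => simp [eval, norm]
  | cons c p ih =>
    simp only [eval, norm]
    push_cast
    refine (abs_add_le _ _).trans (add_le_add (by simp) ?_)
    rw [abs_mul]
    nlinarith [abs_nonneg (eval p x), abs_nonneg x]

lemma eval_pos_of_dominant {p : List ℤ} (hp : dominant p) {x : ℝ} (hx : |x| ≤ 1) :
    0 < eval p x := by
  cases p with
  | nil => simp [dominant] at hp
  | cons c p =>
    simp only [dominant, decide_eq_true_eq] at hp
    have h1 : (norm p : ℝ) < c := by exact_mod_cast hp
    have h2 := abs_eval_le_norm p hx
    have h3 : |x * eval p x| ≤ norm p := by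
      rw [abs_mul]
      nlinarith [abs_nonneg (eval p x), abs_nonneg x]
    simp only [eval]
    linarith [(abs_le.1 h3).1]

lemma eval_pos_of_positive {M : ℕ} (hM : M ≠ 0) {p : List ℤ} (hp : positive M p) {x : ℝ}
    (hx : x ∈ Icc (-5 : ℝ) 5) : 0 < eval p x := by
  simp only [positive, List.all_eq_true, List.mem_range] at hp
  have hM' : (0 : ℝ) < M := by positivity
  obtain ⟨j, hj, hxj⟩ : ∃ j < 5 * M, |M * x - (2 * j + 1 - 5 * M : ℝ)| ≤ 1 := by
    rcases hx.2.eq_or_lt with rfl | hlt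
    · refine ⟨5 * M - 1, by lia, ?_⟩
      rw [Nat.cast_sub (by lia)]
      push_cast
      rw [abs_le]; constructor <;> linarith
    · have h0 : 0 ≤ M * (x + 5) / 2 :=
        div_nonneg (mul_nonneg hM'.le (by linarith [hx.1])) (by norm_num)
      refine ⟨⌊M * (x + 5) / 2⌋₊, ?_, ?_⟩
      · rw [Nat.floor_lt h0]
        push_cast
        nlinarith
      · have h1 := Nat.floor_le h0
        have h2 := Nat.lt_floor_add_one (M * (x + 5) / 2)
        rw [abs_le]; constructor <;> linarith
  have h1 := eval_pos_of_dominant (hp j hj) hxj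
  rw [eval_rescale hM] at h1
  push_cast at h1
  rw [add_sub_cancel, mul_div_cancel_left₀ x hM'.ne'] at h1
  exact pos_of_mul_pos_right h1 (by positivity)

lemma continuous_eval (p : List ℤ) : Continuous (eval p) :=
  continuous_iff_continuousAt.2 fun x => (hasDerivAt_eval p x).continuousAt

end IntPoly

/-! ### An approximate eigenfunction of the transfer operator -/

open IntPoly

/-- Coefficients, in the variable `v = 2 * x - 5`, of an approximate eigenfunction of the transfer
operator. -/
def density : List ℤ :=
  [767144346024969006951739864197607770679779219345078998373274,
   21727517637887048246954659801174088425080499579744002564421,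
   2352192054888165100394786306858755143413291532284244786395,
   222476764909058601938524355654239868166015434775953385149,
   25067749423916311023840469815357636302904039420105790323,
   2835130049276045161512761135939818499530156214890815783,
   334056975392270540640352588413937440751378781400484162,
   39915157723212293480829511818594176853392041381052355,
   4845866471682914827113024665022499518981454972374041,
   594323767933115363372127839815936450428085508400338,
   73539102169698589568084638353924863225427989991409,
   9162483550419337510668335978287364188782955839397,
   1148260937451130617868312963371892822635641232092,
   144605366489210856206087669226759642875597888982,
   18286961974750538706593006515821096738714810701,
   2320925856819634090986344906740174961860690302, 295493644020834099518138965615678703310761926,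
   37728682236272393884965513514880011433747652, 4828665099689155187938369315043204443302467,
   618525454960354288930995351845292135231795, 79488536890125947960696460859549390935930,
   10408828611970628198942857978871286414370, 1342739251950069742331440643077069400168,
   143529472609895838912888768381671994208, 18490595247757736677852056793680144079,
   6520621349572532070539515582093013307, 853618450156457677419529746673111162,
   -353784067664962190536465480428319591, -46765214016385231666049682176808652,
   36754369285373415521503195573772322, 4846820537719319034661628707064753,
   -2610958992943505703956119392418263, -344430381001365293323086093280175,
   156464548829796734611984555502853, 20638489582067490956457994638639,
   -7538911421303372396964441845529, -994429347278202409866667907564,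
   292833484545232274635264329217, 38625687214245316607377854626, -9004189359190537272605126150,
   -1187663213223787264810251781, 214731561017851524628671241, 28322667205903128725064153,
   -3831755792037159514031365, -505387567304817808593365, 48304725771673961862330,
   6370896148305160427119, -384855324174056204052, -50756127470464604086, 1473314075804830236,
   194290972886323757]

/-- The polynomial `15 - 2 * v`, equal to `25 - 4 * x`. -/
def discr : List ℤ := [15, -2]

/-- The sum of `density` over the two preimages is twice this polynomial. -/
def evenDensity : List ℤ := comp (evens density) discr

/-- The common denominator of the logarithmic derivative of the quotient of `density` and its
transform. -/
def logDerivDenom : List ℤ := mul discr (mul density evenDensity)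

/-- The numerator of the logarithmic derivative of the quotient of `density` and its transform,
multiplied by `10 ^ 18`. -/
def logDerivNum : List ℤ :=
  add (smul (10 ^ 18) (mul discr (add (mul (deriv density) evenDensity)
    (smul 2 (mul (comp (deriv (evens density)) discr) density)))))
    (smul (-551618568372460932) (mul density evenDensity))

lemma positive_density : positive 1 density := by decide +kernel

lemma positive_evenDensity : positive 1 evenDensity := by decide +kernel

lemma positive_add_logDerivNum : positive 2 (add (smul 100 logDerivDenom) logDerivNum) := by
  decide +kernel

lemma positive_sub_logDerivNum :
    positive 2 (add (smul 100 logDerivDenom) (smul (-1) logDerivNum)) := by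
  decide +kernel

lemma log_two_mem_Icc :
    Real.log 2 ∈ Icc (0.6931471805599453094 : ℝ) 0.6931471805599453095 := by
  have h1 := Real.sum_range_le_log_div (x := 1 / 3) (by norm_num) (by norm_num) 20
  have h2 := Real.log_div_le_sum_range_add (x := 1 / 3) (by norm_num) (by norm_num) 20
  rw [show (1 + 1 / 3 : ℝ) / (1 - 1 / 3) = 2 by norm_num] at h1 h2
  norm_num [Finset.sum_range_succ] at h1 h2
  constructor <;> linarith

lemma eval_density_neg_half_pos : 0 < eval density (-1 / 2) :=
  eval_pos_of_positive one_ne_zero positive_density (by norm_num)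

lemma eval_evenDensity_neg_half_pos : 0 < eval evenDensity (-1 / 2) :=
  eval_pos_of_positive one_ne_zero positive_evenDensity (by norm_num)

lemma eval_evenDensity_div_mem_Icc :
    eval evenDensity (-1 / 2) / eval density (-1 / 2) ∈
      Icc ((1 + 0.0357640052677802505530 : ℝ) / (1 - 0.0357640052677802505530)) ((1 + 0.0357640052677802505531) / (1 - 0.0357640052677802505531)) := by
  have h := eval_density_neg_half_pos
  rw [mem_Icc, le_div_iff₀ h, div_le_iff₀ h, evenDensity, eval_comp]
  constructor <;> norm_num [density, discr, evens, eval]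

lemma log_evenDensity_sub_log_density_mem_Icc :
    Real.log (eval evenDensity (-1 / 2)) - Real.log (eval density (-1 / 2)) ∈
      Icc (0.07155853026382411945 : ℝ) 0.07155853026382411947 := by
  have hd := eval_density_neg_half_pos
  have he := eval_evenDensity_neg_half_pos
  rw [← Real.log_div he.ne' hd.ne']
  have h1 := Real.sum_range_le_log_div (x := 0.0357640052677802505530)
    (by norm_num) (by norm_num) 8
  have h2 := Real.log_div_le_sum_range_add (x := 0.0357640052677802505531)
    (by norm_num) (by norm_num) 8
  obtain ⟨h3, h4⟩ := eval_evenDensity_div_mem_Icc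
  have h5 := Real.log_le_log (by norm_num) h3
  have h6 := Real.log_le_log (by positivity) h4
  generalize Real.log ((1 + 0.0357640052677802505530 : ℝ) / (1 - 0.0357640052677802505530)) = l at h1 h5
  generalize Real.log ((1 + 0.0357640052677802505531 : ℝ) / (1 - 0.0357640052677802505531)) = l' at h2 h6
  norm_num [Finset.sum_range_succ] at h1 h2
  constructor <;> linarith

/-- The logarithm of the quotient of the approximate eigenfunction and its transform. -/
noncomputable def logQuotient (v : ℝ) : ℝ :=
  Real.log (eval density v) + 0.551618568372460932 / 2 * Real.log (15 - 2 * v) -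
    Real.log (2 * eval evenDensity v)

lemma abs_logQuotient_neg_half_le : |logQuotient (-1 / 2)| ≤ 1 / 10 ^ 17 := by
  have he := eval_evenDensity_neg_half_pos
  obtain ⟨h1, h2⟩ := log_two_mem_Icc
  obtain ⟨h3, h4⟩ := log_evenDensity_sub_log_density_mem_Icc
  have h16 : Real.log (15 - 2 * (-1 / 2)) = 4 * Real.log 2 := by
    rw [show (15 - 2 * (-1 / 2) : ℝ) = 2 ^ 4 by norm_num, Real.log_pow]
    norm_num
  rw [logQuotient, h16, Real.log_mul two_ne_zero he.ne', abs_le]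
  constructor <;> norm_num at * <;> linarith

lemma eval_discr (v : ℝ) : eval discr v = 15 - 2 * v := by
  simp [discr, eval]; ring

lemma hasDerivAt_logQuotient {v : ℝ} (hv : v ∈ Icc (-5 : ℝ) 5) :
    HasDerivAt logQuotient (eval logDerivNum v / (10 ^ 18 * eval logDerivDenom v)) v := by
  have hF := eval_pos_of_positive one_ne_zero positive_density hv
  have hE := eval_pos_of_positive one_ne_zero positive_evenDensity hv
  have hz : 0 < 15 - 2 * v := by linarith [hv.2]
  have hdz : HasDerivAt (fun v : ℝ => 15 - 2 * v) (-2) v := by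
    simpa using ((hasDerivAt_id v).const_mul 2).const_sub 15
  have hdE : HasDerivAt (eval evenDensity)
      (eval (deriv (evens density)) (15 - 2 * v) * -2) v := by
    have h := (hasDerivAt_eval (evens density) (15 - 2 * v)).comp v hdz
    refine h.congr_of_eventuallyEq (.of_forall fun w => ?_)
    rw [evenDensity, eval_comp, eval_discr, Function.comp]
  have h := (((hasDerivAt_eval density v).log hF.ne').add
    ((hdz.log hz.ne').const_mul (0.551618568372460932 / 2))).sub
    ((hdE.const_mul 2).log (by positivity))
  refine h.congr_deriv ?_
  simp only [logDerivNum, logDerivDenom, eval_add, eval_smul, eval_mul, eval_comp, eval_discr]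
  push_cast
  generalize eval (deriv (evens density)) (15 - 2 * v) = a
  generalize eval (deriv density) v = b
  generalize eval evenDensity v = e at *
  generalize eval density v = f at *
  field_simp
  ring

lemma abs_logQuotient_le {v : ℝ} (hv : v ∈ Icc (-5 : ℝ) 5) : |logQuotient v| ≤ 6 / 10 ^ 16 := by
  have hbound : ∀ w ∈ Icc (-5 : ℝ) 5,
      ‖eval logDerivNum w / (10 ^ 18 * eval logDerivDenom w)‖ ≤ 1 / 10 ^ 16 := by
    intro w hw
    have hF := eval_pos_of_positive one_ne_zero positive_density hw
    have hE := eval_pos_of_positive one_ne_zero positive_evenDensity hw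
    have hz : 0 < 15 - 2 * w := by linarith [hw.2]
    have h1 := eval_pos_of_positive two_ne_zero positive_add_logDerivNum hw
    have h2 := eval_pos_of_positive two_ne_zero positive_sub_logDerivNum hw
    have hD : 0 < eval logDerivDenom w := by
      rw [logDerivDenom, eval_mul, eval_mul, eval_discr]
      positivity
    simp only [eval_add, eval_smul] at h1 h2
    push_cast at h1 h2
    rw [Real.norm_eq_abs, abs_le, le_div_iff₀ (by positivity), div_le_iff₀ (by positivity)]
    constructor <;> norm_num <;> linarith
  have h := (convex_Icc (-5 : ℝ) 5).norm_image_sub_le_of_norm_hasDerivWithin_le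
    (fun w hw => (hasDerivAt_logQuotient hw).hasDerivWithinAt) hbound
    (show (-1 / 2 : ℝ) ∈ Icc (-5 : ℝ) 5 by norm_num) hv
  have h0 := abs_logQuotient_neg_half_le
  have h1 : ‖v - -1 / 2‖ ≤ 5.5 := by
    rw [Real.norm_eq_abs, abs_le]
    constructor <;> norm_num <;> linarith [hv.1, hv.2]
  rw [Real.norm_eq_abs] at h
  have h2 := abs_add_le (logQuotient v - logQuotient (-1 / 2)) (logQuotient (-1 / 2))
  rw [sub_add_cancel] at h2
  norm_num at *
  linarith

lemma log_five_gt : 1.6 < Real.log 5 := by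
  rw [Real.lt_log_iff_exp_lt (by norm_num)]
  have h := Real.exp_one_lt_d9
  have h1 : Real.exp 1.6 ^ 5 < 5 ^ 5 := by
    rw [← Real.exp_nat_mul, show ((5 : ℕ) : ℝ) * 1.6 = (8 : ℕ) * 1 by norm_num, Real.exp_nat_mul]
    calc Real.exp 1 ^ 8 < 2.7182818286 ^ 8 := by gcongr
      _ < 5 ^ 5 := by norm_num
  exact lt_of_pow_lt_pow_left₀ 5 (by norm_num) h1

/-- The approximate eigenfunction in the original variable. -/
noncomputable def eigenfunction (x : ℝ) : ℝ := eval density (2 * x - 5)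

lemma two_mul_sub_mem_Icc {x : ℝ} (hx : x ∈ Icc (0 : ℝ) 5) : 2 * x - 5 ∈ Icc (-5 : ℝ) 5 :=
  ⟨by linarith [hx.1], by linarith [hx.2]⟩

lemma eigenfunction_pos {x : ℝ} (hx : x ∈ Icc (0 : ℝ) 5) : 0 < eigenfunction x :=
  eval_pos_of_positive one_ne_zero positive_density (two_mul_sub_mem_Icc hx)

lemma continuous_eigenfunction : Continuous eigenfunction :=
  (continuous_eval density).comp (by fun_prop)

lemma transfer_eigenfunction (s : ℝ) {x : ℝ} (hx : x ∈ Icc (0 : ℝ) 5) :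
    (√(25 - 4 * x))⁻¹ ^ s * (eigenfunction (S 1 x) + eigenfunction (S (-1) x)) =
      Real.exp ((0.551618568372460932 - s) / 2 * Real.log (25 - 4 * x) -
        logQuotient (2 * x - 5)) * eigenfunction x := by
  have hz : 0 < 25 - 4 * x := by linarith [hx.2]
  have hE := eval_pos_of_positive one_ne_zero positive_evenDensity (two_mul_sub_mem_Icc hx)
  have hF := eigenfunction_pos hx
  have hsum : eigenfunction (S 1 x) + eigenfunction (S (-1) x) =
      2 * eval evenDensity (2 * x - 5) := by
    have h := eval_add_eval_neg density (√(25 - 4 * x))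
    rw [Real.sq_sqrt hz.le] at h
    rw [evenDensity, eval_comp, eval_discr, show 15 - 2 * (2 * x - 5) = 25 - 4 * x by ring, ← h]
    simp only [eigenfunction, S]
    congr 2 <;> ring
  have hpow : (√(25 - 4 * x))⁻¹ ^ s = Real.exp (-(s / 2) * Real.log (25 - 4 * x)) := by
    rw [Real.rpow_def_of_pos (by positivity), Real.log_inv, Real.log_sqrt hz.le]
    congr 1; ring
  rw [hsum, hpow, logQuotient, show 15 - 2 * (2 * x - 5) = 25 - 4 * x by ring]
  have hFE : 2 * eval evenDensity (2 * x - 5) =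
      Real.exp (Real.log (2 * eval evenDensity (2 * x - 5)) -
        Real.log (eval density (2 * x - 5))) * eigenfunction x := by
    rw [Real.exp_sub, Real.exp_log (by positivity),
      Real.exp_log (show 0 < eval density (2 * x - 5) from hF)]
    exact (div_mul_cancel₀ _ hF.ne').symm
  nth_rewrite 1 [hFE]
  rw [← mul_assoc, ← Real.exp_add]
  congr 2; ring

theorem stmt_2 (J : Set ℝ) (hsub : J ⊆ Set.Icc 0 5) (hne : J.Nonempty)
    (hcl : IsClosed J) (heq : J = S (-1) '' J ∪ S 1 '' J)
    (hmin : ∀ J' : Set ℝ, J' ⊆ Set.Icc 0 5 → J'.Nonempty → IsClosed J' →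
      J' = S (-1) '' J' ∪ S 1 '' J' → J ⊆ J') :
    ENNReal.ofReal 0.55161856837246 ≤ dimH J ∧
      dimH J ≤ ENNReal.ofReal 0.55161856837247 := by
  have hlog : ∀ x ∈ Icc (0 : ℝ) 5, 1.6 < Real.log (25 - 4 * x) := fun x hx =>
    log_five_gt.trans_le (Real.log_le_log (by norm_num) (by linarith [hx.2]))
  have hquot : ∀ x ∈ Icc (0 : ℝ) 5, |logQuotient (2 * x - 5)| ≤ 6 / 10 ^ 16 := fun x hx =>
    abs_logQuotient_le (two_mul_sub_mem_Icc hx)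
  have h0 : (0 : ℝ) ∈ Icc (0 : ℝ) 5 := by simp
  constructor
  · obtain ⟨y, hy, hM⟩ := isCompact_Icc.exists_isMaxOn ⟨0, h0⟩
      continuous_eigenfunction.continuousOn
    refine le_dimH_of_le_transfer hsub hne hcl heq (f := eigenfunction) (q := Real.exp (1 / 10 ^ 16))
      (by norm_num) (Real.one_lt_exp_iff.2 (by norm_num)) (eigenfunction_pos h0)
      (eigenfunction_pos hy) (fun x hx => hM hx) fun x hx => ?_
    rw [transfer_eigenfunction _ hx]
    refine mul_le_mul_of_nonneg_right (Real.exp_le_exp.2 ?_) (eigenfunction_pos hx).le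
    have h1 := hlog x hx
    have h2 := (abs_le.1 (hquot x hx)).2
    norm_num at *
    linarith
  · obtain ⟨y, hy, hm⟩ := isCompact_Icc.exists_isMinOn ⟨0, h0⟩
      continuous_eigenfunction.continuousOn
    refine dimH_le_of_transfer_le hsub heq (f := eigenfunction) (q := Real.exp (-(6 / 10 ^ 15)))
      (by norm_num) (Real.exp_pos _).le (Real.exp_lt_one_iff.2 (by norm_num))
      (eigenfunction_pos hy) (fun x hx => hm hx) fun x hx => ?_
    rw [transfer_eigenfunction _ hx]
    refine mul_le_mul_of_nonneg_right (Real.exp_le_exp.2 ?_) (eigenfunction_pos hx).le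
    have h1 := hlog x hx
    have h2 := (abs_le.1 (hquot x hx)).1
    norm_num at *
    linarith
end

section
/- For every integer d ≥ 2, if J_{T^d} ⊆ [0, 3+d] is nonempty, closed, satisfies J_{T^d} = S_{−1,d}(J_{T^d}) ∪ S_{+1,d}(J_{T^d}), and is contained in every nonempty closed subset of [0,3+d] satisfying this set equation, then log 2 / log(d+3) ≤ dim_H(J_{T^d}) ≤ 2·log 2 / (log(d+3) + log(d−1)). In particular dim_H(J_{T^d}) → 0 as d → ∞. -/
open Set MeasureTheory Filter

/-- The two inverse branches of the decimation polynomial `R_d(x) = x((3+d)-x)`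
associated to the `d`-dimensional Sierpiński gasket. -/
noncomputable def Sd (d : ℕ) (ε : ℝ) (x : ℝ) : ℝ :=
  ((3 + (d:ℝ)) + ε * Real.sqrt ((3 + (d:ℝ))^2 - 4 * x)) / 2

open scoped ENNReal NNReal Topology

/-- The cylinder `f (w 0) ∘ ⋯ ∘ f (w (n - 1))` applied to `J`, for the word `w` of length `n`. -/
def ifsCylinder {ι X : Type*} (f : ι → X → X) (J : Set X) : (n : ℕ) → (Fin n → ι) → Set X
  | 0, _ => J
  | n + 1, w => f (w 0) '' ifsCylinder f J n (Fin.tail w)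

theorem ifsCylinder_subset {ι X : Type*} {f : ι → X → X} {J : Set X}
    (hmaps : ∀ i, MapsTo (f i) J J) (n : ℕ) (w : Fin n → ι) : ifsCylinder f J n w ⊆ J := by
  induction n with
  | zero => exact subset_rfl
  | succ n ih => exact (image_mono (ih _)).trans (hmaps _).image_subset

theorem subset_iUnion_ifsCylinder {ι X : Type*} {f : ι → X → X} {J : Set X}
    (hcov : J ⊆ ⋃ i, f i '' J) (n : ℕ) : J ⊆ ⋃ w, ifsCylinder f J n w := by
  induction n with
  | zero => exact fun x hx => mem_iUnion.2 ⟨Fin.elim0, hx⟩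
  | succ n ih =>
    intro x hx
    obtain ⟨i, y, hy, rfl⟩ := mem_iUnion.1 (hcov hx)
    obtain ⟨w, hw⟩ := mem_iUnion.1 (ih hy)
    exact mem_iUnion.2 ⟨Fin.cons i w, y, by simpa using hw, by simp⟩

theorem ediam_ifsCylinder_le {ι X : Type*} [EMetricSpace X] {f : ι → X → X} {J : Set X} {c : ℝ≥0}
    (hmaps : ∀ i, MapsTo (f i) J J) (hf : ∀ i, LipschitzOnWith c (f i) J)
    (n : ℕ) (w : Fin n → ι) :
    Metric.ediam (ifsCylinder f J n w) ≤ (c : ℝ≥0∞) ^ n * Metric.ediam J := by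
  induction n with
  | zero => simp [ifsCylinder]
  | succ n ih =>
    have h := (hf (w 0)).holderOnWith.ediam_image_le_of_subset
      (ifsCylinder_subset hmaps n (Fin.tail w))
    rw [NNReal.coe_one, ENNReal.rpow_one] at h
    calc Metric.ediam (ifsCylinder f J (n + 1) w)
        ≤ c * Metric.ediam (ifsCylinder f J n (Fin.tail w)) := h
      _ ≤ c * ((c : ℝ≥0∞) ^ n * Metric.ediam J) := by gcongr; exact ih _
      _ = (c : ℝ≥0∞) ^ (n + 1) * Metric.ediam J := by ring

/-- The invariant set of an iterated function system with contraction ratio `c` has dimension at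
most the solution `s` of `card ι * c ^ s = 1`. -/
theorem dimH_le_of_ifs {ι X : Type*} [Fintype ι] [EMetricSpace X] {f : ι → X → X} {J : Set X}
    {c s : ℝ≥0} (hc : c < 1) (hs : (Fintype.card ι : ℝ≥0) * c ^ (s : ℝ) ≤ 1)
    (hmaps : ∀ i, MapsTo (f i) J J) (hcov : J ⊆ ⋃ i, f i '' J)
    (hf : ∀ i, LipschitzOnWith c (f i) J) (hJ : Metric.ediam J ≠ ∞) : dimH J ≤ s := by
  borelize X
  have hs0 : (0 : ℝ) ≤ s := s.coe_nonneg
  refine dimH_le_of_hausdorffMeasure_ne_top (ne_top_of_le_ne_top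
    (ENNReal.rpow_ne_top_of_nonneg hs0 hJ) ?_)
  have hlim : Tendsto (fun n : ℕ => (c : ℝ≥0∞) ^ n * Metric.ediam J) atTop (𝓝 0) := by
    have h := ENNReal.Tendsto.mul_const (b := Metric.ediam J)
      (ENNReal.tendsto_pow_atTop_nhds_zero_of_lt_one (ENNReal.coe_lt_one_iff.2 hc)) (Or.inr hJ)
    simpa using h
  refine (Measure.hausdorffMeasure_le_liminf_sum (s : ℝ) J _ hlim (ifsCylinder f J)
    (Eventually.of_forall (ediam_ifsCylinder_le hmaps hf))
    (Eventually.of_forall (subset_iUnion_ifsCylinder hcov))).trans ?_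
  refine (liminf_le_liminf (Eventually.of_forall fun n => ?_)).trans
    (liminf_const (f := (atTop : Filter ℕ)) (Metric.ediam J ^ (s : ℝ))).le
  have hs' : (Fintype.card ι : ℝ≥0∞) * (c : ℝ≥0∞) ^ (s : ℝ) ≤ 1 := by
    rw [← ENNReal.coe_rpow_of_nonneg _ hs0]
    exact_mod_cast hs
  calc ∑ w, Metric.ediam (ifsCylinder f J n w) ^ (s : ℝ)
      ≤ ∑ _w : Fin n → ι, ((c : ℝ≥0∞) ^ n * Metric.ediam J) ^ (s : ℝ) := by
        gcongr with w
        exact ediam_ifsCylinder_le hmaps hf n w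
    _ = ((Fintype.card ι : ℝ≥0∞) * (c : ℝ≥0∞) ^ (s : ℝ)) ^ n * Metric.ediam J ^ (s : ℝ) := by
        rw [Finset.sum_const, Finset.card_univ, Fintype.card_fun, Fintype.card_fin, nsmul_eq_mul,
          ENNReal.mul_rpow_of_nonneg _ _ hs0, mul_pow, ← ENNReal.rpow_natCast,
          ← ENNReal.rpow_natCast (_ ^ (s : ℝ)), ← ENNReal.rpow_mul, ← ENNReal.rpow_mul,
          mul_comm (n : ℝ)]
        push_cast
        ring
    _ ≤ 1 ^ n * Metric.ediam J ^ (s : ℝ) := by gcongr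
    _ = Metric.ediam J ^ (s : ℝ) := by simp

/-- The number with binary digits recording the visits of the orbit of `x` under `T` to `A`. -/
noncomputable def itineraryValue {X : Type*} (T : X → X) (A : Set X) (x : X) : ℝ :=
  ∑' n : ℕ, A.indicator 1 (T^[n] x) * (1 / 2 : ℝ) ^ (n + 1)

section Itinerary

variable {X : Type*} (T : X → X) (A : Set X)

theorem indicator_one_mem_Icc (x : X) : A.indicator (1 : X → ℝ) x ∈ Icc (0 : ℝ) 1 := by
  by_cases hx : x ∈ A <;> simp [hx]

theorem summable_half_pow_succ : Summable fun n : ℕ => (1 / 2 : ℝ) ^ (n + 1) :=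
  (summable_nat_add_iff 1).2 summable_geometric_two

theorem summable_itineraryValue (x : X) :
    Summable fun n : ℕ => A.indicator 1 (T^[n] x) * (1 / 2 : ℝ) ^ (n + 1) :=
  summable_half_pow_succ.of_nonneg_of_le
    (fun n => mul_nonneg (indicator_one_mem_Icc A _).1 (by positivity))
    (fun n => mul_le_of_le_one_left (by positivity) (indicator_one_mem_Icc A _).2)

theorem itineraryValue_mem_Icc (x : X) : itineraryValue T A x ∈ Icc (0 : ℝ) 1 := by
  refine ⟨tsum_nonneg fun n => mul_nonneg (indicator_one_mem_Icc A _).1 (by positivity), ?_⟩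
  calc itineraryValue T A x ≤ ∑' n : ℕ, (1 / 2 : ℝ) ^ (n + 1) :=
        (summable_itineraryValue T A x).tsum_le_tsum
          (fun n => mul_le_of_le_one_left (by positivity) (indicator_one_mem_Icc A _).2)
          summable_half_pow_succ
    _ = 1 := by
        simp_rw [pow_succ]
        rw [tsum_mul_right, tsum_geometric_two]
        norm_num

theorem itineraryValue_eq (x : X) :
    itineraryValue T A x = (A.indicator 1 x + itineraryValue T A (T x)) / 2 := by
  rw [itineraryValue, (summable_itineraryValue T A x).tsum_eq_zero_add, itineraryValue, add_div]
  congr 1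
  · simp [div_eq_mul_inv]
  · rw [← tsum_div_const]
    refine tsum_congr fun n => ?_
    rw [Function.iterate_succ_apply, pow_succ _ (n + 1)]
    ring

end Itinerary

theorem itineraryValue_dist_le {X : Type*} [MetricSpace X] {T : X → X} {A J : Set X} {L δ r : ℝ}
    (hL : 0 < L) (hδ : 0 < δ) (hr : 0 ≤ r) (hLr : L ^ r = 2) (hT : MapsTo T J J)
    (hexp : ∀ x ∈ J, ∀ y ∈ J, dist (T x) (T y) ≤ L * dist x y)
    (hsep : ∀ x ∈ J, ∀ y ∈ J, x ∈ A → y ∉ A → δ ≤ dist x y)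
    (n : ℕ) : ∀ x ∈ J, ∀ y ∈ J, dist (itineraryValue T A x) (itineraryValue T A y) ≤
      max ((1 / 2) ^ n) ((1 / δ) ^ r * dist x y ^ r) := by
  have hfar (x y : X) (h : δ ≤ dist x y) : 1 ≤ (1 / δ) ^ r * dist x y ^ r := by
    rw [← Real.mul_rpow (by positivity) dist_nonneg]
    refine Real.one_le_rpow ?_ hr
    rwa [one_div, inv_mul_eq_div, one_le_div hδ]
  have hone (x y : X) : dist (itineraryValue T A x) (itineraryValue T A y) ≤ 1 := by
    simpa using Real.dist_le_of_mem_Icc (itineraryValue_mem_Icc T A x)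
      (itineraryValue_mem_Icc T A y)
  induction n with
  | zero => exact fun x _ y _ => le_max_of_le_left (by simpa using hone x y)
  | succ n ih =>
    intro x hx y hy
    have hsame (h : A.indicator (1 : X → ℝ) x = A.indicator 1 y) :
        dist (itineraryValue T A x) (itineraryValue T A y) ≤
          max ((1 / 2) ^ (n + 1)) ((1 / δ) ^ r * dist x y ^ r) := by
      have hpow : dist (T x) (T y) ^ r ≤ 2 * dist x y ^ r := by
        rw [← hLr, ← Real.mul_rpow hL.le dist_nonneg]
        exact Real.rpow_le_rpow dist_nonneg (hexp x hx y hy) hr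
      have hδr : 0 ≤ (1 / δ) ^ r := by positivity
      calc dist (itineraryValue T A x) (itineraryValue T A y)
          = dist (itineraryValue T A (T x)) (itineraryValue T A (T y)) / 2 := by
            rw [itineraryValue_eq T A x, itineraryValue_eq T A y, h, Real.dist_eq, Real.dist_eq,
              ← abs_two (α := ℝ), ← abs_div, abs_two]
            congr 1
            ring
        _ ≤ max ((1 / 2) ^ n) ((1 / δ) ^ r * dist (T x) (T y) ^ r) / 2 := by
            gcongr
            exact ih _ (hT hx) _ (hT hy)
        _ ≤ max ((1 / 2) ^ n) ((1 / δ) ^ r * (2 * dist x y ^ r)) / 2 := by gcongr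
        _ = _ := by
            rw [← max_div_div_right (by norm_num)]
            congr 1 <;> ring
    by_cases hxA : x ∈ A <;> by_cases hyA : y ∈ A
    · exact hsame (by simp [hxA, hyA])
    · exact le_max_of_le_right ((hone x y).trans (hfar x y (hsep x hx y hy hxA hyA)))
    · refine le_max_of_le_right ((hone x y).trans (hfar x y ?_))
      rw [dist_comm]
      exact hsep y hy x hx hyA hxA
    · exact hsame (by simp [hxA, hyA])

/-- A closed set of reals containing both halves of itself contains the unit interval. -/
theorem Icc_subset_of_halves {K : Set ℝ} (hK : IsClosed K) (hne : (K ∩ Icc 0 1).Nonempty)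
    (h0 : ∀ t ∈ K, t / 2 ∈ K) (h1 : ∀ t ∈ K, (1 + t) / 2 ∈ K) : Icc 0 1 ⊆ K := by
  have happrox (n : ℕ) : ∀ t ∈ Icc (0 : ℝ) 1, ∃ k ∈ K, dist k t ≤ (1 / 2) ^ n := by
    induction n with
    | zero =>
      intro t ht
      obtain ⟨k, hk, hk'⟩ := hne
      exact ⟨k, hk, by simpa using Real.dist_le_of_mem_Icc hk' ht⟩
    | succ n ih =>
      intro t ht
      rcases le_total t (1 / 2) with h | h
      · obtain ⟨k, hk, hkt⟩ := ih (2 * t) ⟨by linarith [ht.1], by linarith⟩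
        refine ⟨k / 2, h0 k hk, ?_⟩
        rw [Real.dist_eq, abs_le] at *
        rw [pow_succ]
        constructor <;> linarith [hkt.1, hkt.2]
      · obtain ⟨k, hk, hkt⟩ := ih (2 * t - 1) ⟨by linarith, by linarith [ht.2]⟩
        refine ⟨(1 + k) / 2, h1 k hk, ?_⟩
        rw [Real.dist_eq, abs_le] at *
        rw [pow_succ]
        constructor <;> linarith [hkt.1, hkt.2]
  intro t ht
  rw [← hK.closure_eq, Metric.mem_closure_iff]
  intro ε hε
  obtain ⟨n, hn⟩ := exists_pow_lt_of_lt_one hε (by norm_num : (1 / 2 : ℝ) < 1)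
  obtain ⟨k, hk, hkt⟩ := happrox n t ht
  exact ⟨k, hk, by rw [dist_comm]; exact hkt.trans_lt hn⟩

/-- If `T` expands distances on `J` at most by the factor `L` and maps each of two separated pieces
of `J` onto `J`, then `J` has dimension at least `log 2 / log L`. -/
theorem log_two_div_log_le_dimH {X : Type*} [MetricSpace X] {T : X → X} {A J : Set X} {L δ : ℝ}
    (hL : 1 < L) (hδ : 0 < δ) (hJ : IsCompact J) (hne : J.Nonempty) (hT : MapsTo T J J)
    (hexp : ∀ x ∈ J, ∀ y ∈ J, dist (T x) (T y) ≤ L * dist x y)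
    (hsep : ∀ x ∈ J, ∀ y ∈ J, x ∈ A → y ∉ A → δ ≤ dist x y)
    (hA : SurjOn T (J ∩ A) J) (hA' : SurjOn T (J \ A) J) :
    ENNReal.ofReal (Real.log 2 / Real.log L) ≤ dimH J := by
  set r : ℝ := Real.log 2 / Real.log L with hr_def
  have hlogL : 0 < Real.log L := Real.log_pos hL
  have hr : 0 < r := div_pos (Real.log_pos one_lt_two) hlogL
  have hLr : L ^ r = 2 := by
    rw [Real.rpow_def_of_pos (by linarith), hr_def, mul_div_cancel₀ _ hlogL.ne',
      Real.exp_log two_pos]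
  have hdist (x) (hx : x ∈ J) (y) (hy : y ∈ J) :
      dist (itineraryValue T A x) (itineraryValue T A y) ≤ (1 / δ) ^ r * dist x y ^ r := by
    have hlim : Tendsto (fun n : ℕ => max ((1 / 2 : ℝ) ^ n) ((1 / δ) ^ r * dist x y ^ r)) atTop
        (𝓝 (max 0 ((1 / δ) ^ r * dist x y ^ r))) :=
      (tendsto_pow_atTop_nhds_zero_of_lt_one (by norm_num) (by norm_num)).max tendsto_const_nhds
    rw [max_eq_right (by positivity)] at hlim
    exact ge_of_tendsto' hlim fun n =>
      itineraryValue_dist_le (by linarith) hδ hr.le hLr hT hexp hsep n x hx y hy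
  have hholder : HolderOnWith ((1 / δ) ^ r).toNNReal r.toNNReal (itineraryValue T A) J := by
    intro x hx y hy
    rw [edist_dist, edist_dist, Real.coe_toNNReal r hr.le,
      ENNReal.ofReal_rpow_of_nonneg dist_nonneg hr.le]
    change _ ≤ ENNReal.ofReal _ * _
    rw [← ENNReal.ofReal_mul (by positivity)]
    exact ENNReal.ofReal_le_ofReal (hdist x hx y hy)
  have hr' : 0 < r.toNNReal := Real.toNNReal_pos.2 hr
  have himage : Icc 0 1 ⊆ itineraryValue T A '' J := by
    refine Icc_subset_of_halves
      (hJ.image_of_continuousOn (hholder.continuousOn hr')).isClosed ?_ ?_ ?_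
    · obtain ⟨x, hx⟩ := hne
      exact ⟨_, mem_image_of_mem _ hx, itineraryValue_mem_Icc T A x⟩
    · rintro _ ⟨y, hy, rfl⟩
      obtain ⟨x, hx, rfl⟩ := hA' hy
      exact ⟨x, hx.1, by rw [itineraryValue_eq T A x]; simp [hx.2]⟩
    · rintro _ ⟨y, hy, rfl⟩
      obtain ⟨x, hx, rfl⟩ := hA hy
      exact ⟨x, hx.1, by rw [itineraryValue_eq T A x]; simp [hx.2]⟩
  have hone : dimH (Icc (0 : ℝ) 1) = 1 := by
    rw [Real.dimH_of_nonempty_interior (by simp)]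
    simp
  have h := (hone.symm.le.trans (dimH_mono himage)).trans (hholder.dimH_image_le hr')
  rw [ENNReal.le_div_iff_mul_le (Or.inl (ENNReal.coe_ne_zero.2 hr'.ne'))
    (Or.inl ENNReal.coe_ne_top), one_mul] at h
  exact h

section Branches

variable {d : ℕ} {x y ε : ℝ}

/-- The distance between the images of the two inverse branches. -/
noncomputable def branchGap (d : ℕ) : ℝ := √((3 + (d : ℝ)) * ((d : ℝ) - 1))

theorem one_lt_branchGap (hd : 2 ≤ d) : 1 < branchGap d := by
  have : (2 : ℝ) ≤ d := by exact_mod_cast hd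
  rw [branchGap, Real.lt_sqrt zero_le_one]
  nlinarith

theorem branchGap_le_sqrt (hx : x ≤ 3 + (d : ℝ)) :
    branchGap d ≤ √((3 + (d : ℝ)) ^ 2 - 4 * x) :=
  Real.sqrt_le_sqrt (by nlinarith)

theorem discriminant_nonneg (hd : 2 ≤ d) (hx : x ≤ 3 + (d : ℝ)) :
    0 ≤ (3 + (d : ℝ)) ^ 2 - 4 * x := by
  have : (2 : ℝ) ≤ d := by exact_mod_cast hd
  nlinarith

theorem decimation_Sd (hd : 2 ≤ d) (hx : x ≤ 3 + (d : ℝ)) (hε : ε ^ 2 = 1) :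
    Sd d ε x * (3 + (d : ℝ) - Sd d ε x) = x := by
  have h := Real.sq_sqrt (discriminant_nonneg hd hx)
  rw [Sd]
  linear_combination (-1 / 4) * h - (1 / 4) * √((3 + (d : ℝ)) ^ 2 - 4 * x) ^ 2 * hε

theorem lipschitzOnWith_Sd (hd : 2 ≤ d) (hε : |ε| = 1) :
    LipschitzOnWith (1 / branchGap d).toNNReal (Sd d ε) (Icc 0 (3 + (d : ℝ))) := by
  have hg := one_lt_branchGap hd
  refine LipschitzOnWith.of_dist_le_mul fun x hx y hy => ?_
  rw [Real.coe_toNNReal _ (by positivity), one_div, inv_mul_eq_div, le_div_iff₀ (by linarith),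
    Real.dist_eq, Real.dist_eq]
  have hxs := branchGap_le_sqrt hx.2
  have hys := branchGap_le_sqrt hy.2
  have hxq := Real.sq_sqrt (discriminant_nonneg hd hx.2)
  have hyq := Real.sq_sqrt (discriminant_nonneg hd hy.2)
  have hS : Sd d ε x - Sd d ε y =
      ε * ((√((3 + (d : ℝ)) ^ 2 - 4 * x) - √((3 + (d : ℝ)) ^ 2 - 4 * y)) / 2) := by
    rw [Sd, Sd]
    ring
  rw [hS, abs_mul, hε, one_mul]
  generalize √((3 + (d : ℝ)) ^ 2 - 4 * x) = u at *
  generalize √((3 + (d : ℝ)) ^ 2 - 4 * y) = v at *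
  have hxy : x - y = -((u - v) / 2 * ((u + v) / 2)) := by linear_combination (hxq - hyq) / 4
  rw [hxy, abs_neg, abs_mul, abs_of_pos (by linarith : 0 < (u + v) / 2)]
  gcongr
  linarith

theorem dimH_julia_le (hd : 2 ≤ d) {J : Set ℝ} (hJ : J ⊆ Icc 0 (3 + (d : ℝ)))
    (hinv : J = Sd d (-1) '' J ∪ Sd d 1 '' J) :
    dimH J ≤ ENNReal.ofReal
      (2 * Real.log 2 / (Real.log ((d : ℝ) + 3) + Real.log ((d : ℝ) - 1))) := by
  have hd' : (2 : ℝ) ≤ d := by exact_mod_cast hd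
  have hg := one_lt_branchGap hd
  have hlog : 0 < Real.log (branchGap d) := Real.log_pos hg
  have hexponent : 2 * Real.log 2 / (Real.log ((d : ℝ) + 3) + Real.log ((d : ℝ) - 1)) =
      Real.log 2 / Real.log (branchGap d) := by
    rw [← Real.log_mul (by linarith) (by linarith), branchGap, Real.log_sqrt (by nlinarith),
      add_comm (d : ℝ) 3, div_div_eq_mul_div, mul_comm]
  rw [hexponent]
  have hr : 0 ≤ Real.log 2 / Real.log (branchGap d) :=
    div_nonneg (Real.log_nonneg one_le_two) hlog.le
  refine dimH_le_of_ifs (f := fun b : Bool => Sd d (if b then 1 else -1))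
    (c := (1 / branchGap d).toNNReal) (s := (Real.log 2 / Real.log (branchGap d)).toNNReal)
    ?_ ?_ ?_ ?_ ?_ ?_
  · rw [Real.toNNReal_lt_one]
    exact (div_lt_one (by linarith)).2 hg
  · rw [← NNReal.coe_le_coe]
    push_cast
    rw [Real.coe_toNNReal _ hr, Real.coe_toNNReal _ (by positivity), one_div,
      Real.inv_rpow (by linarith), Real.rpow_def_of_pos (by linarith),
      mul_div_cancel₀ _ hlog.ne', Real.exp_log two_pos]
    simp
  · intro b x hx
    rw [hinv]
    cases b
    · exact Or.inl ⟨x, hx, by simp⟩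
    · exact Or.inr ⟨x, hx, by simp⟩
  · intro z hz
    rw [hinv] at hz
    rcases hz with hz | hz
    · exact mem_iUnion.2 ⟨false, by simpa using hz⟩
    · exact mem_iUnion.2 ⟨true, by simpa using hz⟩
  · intro b
    refine (lipschitzOnWith_Sd hd ?_).mono hJ
    cases b <;> simp
  · exact ((Metric.isBounded_Icc _ _).subset hJ).ediam_ne_top

theorem log_two_div_log_le_dimH_julia (hd : 2 ≤ d) {J : Set ℝ} (hJ : J ⊆ Icc 0 (3 + (d : ℝ)))
    (hne : J.Nonempty) (hclosed : IsClosed J) (hinv : J = Sd d (-1) '' J ∪ Sd d 1 '' J) :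
    ENNReal.ofReal (Real.log 2 / Real.log ((d : ℝ) + 3)) ≤ dimH J := by
  have hd' : (2 : ℝ) ≤ d := by exact_mod_cast hd
  have hg := one_lt_branchGap hd
  have hlow (x) (hx : x ∈ J) : Sd d (-1) x ≤ (3 + (d : ℝ) - branchGap d) / 2 := by
    rw [Sd]
    linarith [branchGap_le_sqrt (hJ hx).2]
  have hhigh (x) (hx : x ∈ J) : (3 + (d : ℝ) + branchGap d) / 2 ≤ Sd d 1 x := by
    rw [Sd]
    linarith [branchGap_le_sqrt (hJ hx).2]
  have hmem_low (x) (hx : x ∈ J) : Sd d (-1) x ∈ J := by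
    rw [hinv]
    exact Or.inl ⟨x, hx, rfl⟩
  have hmem_high (x) (hx : x ∈ J) : Sd d 1 x ∈ J := by
    rw [hinv]
    exact Or.inr ⟨x, hx, rfl⟩
  refine log_two_div_log_le_dimH (T := fun x => x * (3 + (d : ℝ) - x))
    (A := Ici ((3 + (d : ℝ) + branchGap d) / 2)) (δ := branchGap d) (by linarith) (by linarith)
    (isCompact_Icc.of_isClosed_subset hclosed hJ) hne ?_ ?_ ?_ ?_ ?_
  · intro z hz
    rw [hinv] at hz
    rcases hz with ⟨x, hx, rfl⟩ | ⟨x, hx, rfl⟩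
    · simpa only [decimation_Sd hd (hJ hx).2 (by norm_num : (-1 : ℝ) ^ 2 = 1)] using hx
    · simpa only [decimation_Sd hd (hJ hx).2 (by norm_num : (1 : ℝ) ^ 2 = 1)] using hx
  · intro x hx y hy
    have hx' := hJ hx
    have hy' := hJ hy
    have hfactor : x * (3 + (d : ℝ) - x) - y * (3 + (d : ℝ) - y) =
        (3 + (d : ℝ) - x - y) * (x - y) := by ring
    rw [Real.dist_eq, Real.dist_eq, hfactor, abs_mul]
    gcongr
    rw [abs_le]
    constructor <;> linarith [hx'.1, hx'.2, hy'.1, hy'.2]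
  · intro x hx y hy hxA hyA
    rw [hinv] at hy
    rcases hy with ⟨w, hw, rfl⟩ | ⟨w, hw, rfl⟩
    · rw [Real.dist_eq]
      refine le_trans ?_ (le_abs_self _)
      linarith [hlow w hw, mem_Ici.1 hxA]
    · exact absurd (hhigh w hw) hyA
  · exact fun x hx => ⟨Sd d 1 x, ⟨hmem_high x hx, hhigh x hx⟩,
      decimation_Sd hd (hJ hx).2 (by norm_num)⟩
  · refine fun x hx => ⟨Sd d (-1) x, ⟨hmem_low x hx, fun h => ?_⟩,
      decimation_Sd hd (hJ hx).2 (by norm_num)⟩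
    linarith [hlow x hx, mem_Ici.1 h]

end Branches

theorem tendsto_dimH_bound : Tendsto (fun d : ℕ => ENNReal.ofReal
    (2 * Real.log 2 / (Real.log ((d : ℝ) + 3) + Real.log ((d : ℝ) - 1)))) atTop (𝓝 0) := by
  have h3 : Tendsto (fun d : ℕ => Real.log ((d : ℝ) + 3)) atTop atTop :=
    Real.tendsto_log_atTop.comp (tendsto_atTop_add_const_right _ _ tendsto_natCast_atTop_atTop)
  have h1 : Tendsto (fun d : ℕ => Real.log ((d : ℝ) - 1)) atTop atTop :=
    Real.tendsto_log_atTop.comp (tendsto_atTop_add_const_right _ _ tendsto_natCast_atTop_atTop)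
  simpa using ENNReal.tendsto_ofReal
    ((tendsto_const_nhds (x := 2 * Real.log 2)).div_atTop (h3.atTop_add_atTop h1))

theorem stmt_4 :
    (∀ d : ℕ, 2 ≤ d → ∀ J : Set ℝ,
      J ⊆ Set.Icc 0 (3 + (d:ℝ)) → J.Nonempty → IsClosed J →
      J = Sd d (-1) '' J ∪ Sd d 1 '' J →
      (∀ J' : Set ℝ, J' ⊆ Set.Icc 0 (3 + (d:ℝ)) → J'.Nonempty → IsClosed J' →
        J' = Sd d (-1) '' J' ∪ Sd d 1 '' J' → J ⊆ J') →
      ENNReal.ofReal (Real.log 2 / Real.log ((d:ℝ) + 3)) ≤ dimH J ∧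
        dimH J ≤ ENNReal.ofReal
          (2 * Real.log 2 / (Real.log ((d:ℝ) + 3) + Real.log ((d:ℝ) - 1)))) ∧
    (∀ J : ℕ → Set ℝ,
      (∀ d : ℕ, 2 ≤ d →
        (J d ⊆ Set.Icc 0 (3 + (d:ℝ)) ∧ (J d).Nonempty ∧ IsClosed (J d) ∧
          J d = Sd d (-1) '' J d ∪ Sd d 1 '' J d ∧
          (∀ J' : Set ℝ, J' ⊆ Set.Icc 0 (3 + (d:ℝ)) → J'.Nonempty → IsClosed J' →
            J' = Sd d (-1) '' J' ∪ Sd d 1 '' J' → J d ⊆ J'))) →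
      Tendsto (fun d : ℕ => dimH (J d)) atTop (nhds 0)) := by
  refine ⟨fun d hd J hJ hne hclosed hinv _ =>
    ⟨log_two_div_log_le_dimH_julia hd hJ hne hclosed hinv, dimH_julia_le hd hJ hinv⟩,
    fun J hJ => ?_⟩
  refine tendsto_of_tendsto_of_tendsto_of_le_of_le' tendsto_const_nhds tendsto_dimH_bound
    (Eventually.of_forall fun _ => zero_le) ?_
  filter_upwards [eventually_ge_atTop 2] with d hd
  exact dimH_julia_le hd (hJ d hd).1 (hJ d hd).2.2.2.1
end
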